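/- Let X ∈ ℝ^{N×T} be a matrix of rank r < min{N,T} admitting a thin SVD X = UΣVᵀ in which the left factor U ∈ ℝ^{N×r} satisfies ‖U‖_{2,∞} ≤ √(μ₁ r / N) for some constant μ₁ ≥ 1. Fix δ ∈ (0,1) and ε ∈ (0,1), and let m be an integer with m ≥ 3 r μ₁ ln(2r/δ)/ε². If I is a subset of {1,…,N} of size m chosen uniformly at random among all size-m subsets (uniform sampling without replacement), then the row submatrix X(I,:) (the matrix formed by the rows of X indexed by I) has rank r with probability at least 1 − δ. -/

import Mathlib

open Matrix
open scoped Classical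

/-- The `(2,∞)`-norm of a matrix: the maximum Euclidean norm of a row. -/
noncomputable def rowNorm2Inf {m n : Type*} [Fintype m] [Fintype n] (A : Matrix m n ℝ) : ℝ :=
  ⨆ i, Real.sqrt (∑ j, A i j ^ 2)

/-- `IsThinSVD X r U S V` : `X = U S Vᵀ` is a thin singular value decomposition of the
rank-`r` matrix `X`, i.e. `U` and `V` have orthonormal columns and `S` is diagonal with
positive non-increasing diagonal entries (the nonzero singular values of `X`). -/
def IsThinSVD {m n : Type*} [Fintype m] [Fintype n] (X : Matrix m n ℝ) (r : ℕ)
    (U : Matrix m (Fin r) ℝ) (S : Matrix (Fin r) (Fin r) ℝ) (V : Matrix n (Fin r) ℝ) : Prop :=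
  X = U * S * Vᵀ ∧ Uᵀ * U = 1 ∧ Vᵀ * V = 1 ∧ S.IsDiag ∧
    (∀ i, 0 < S i i) ∧ ∀ i j : Fin r, i ≤ j → S j j ≤ S i i

/-!
Let `W` be the span of the rows of `U` drawn so far. Expanding an orthonormal basis of `Wᗮ` in the
tight frame formed by the rows of `U` shows that `codim W` is at most the squared `(2,∞)`-norm of
`U` times the number of rows outside `W`. A further uniform draw therefore lowers the expected
codimension by a factor `1 - 1 / (μ₁ r)`, so after `m` draws it is at most `r * exp (-m / (μ₁ r))`.
By Markov's inequality this also bounds the probability that the sampled rows fail to span, and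
when they span, multiplying by `Σ Vᵀ`, which has a right inverse, does not lower their rank.
-/

open Finset Module
open scoped BigOperators InnerProductSpace

section Averaging

variable {ι : Type*}

lemma one_sub_expect_le_card_filter_eq_zero_div_card {s : Finset ι} (hs : s.Nonempty)
    (f : ι → ℕ) : 1 - 𝔼 i ∈ s, (f i : ℝ) ≤ #{i ∈ s | f i = 0} / #s := by
  have hindicator : 𝔼 i ∈ s, (if f i = 0 then (1 : ℝ) else 0) = #{i ∈ s | f i = 0} / #s := by
    rw [expect_eq_sum_div_card, sum_boole]
  calc 1 - 𝔼 i ∈ s, (f i : ℝ) = 𝔼 i ∈ s, (1 - (f i : ℝ)) := by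
        rw [expect_sub_distrib, expect_const hs]
    _ ≤ 𝔼 i ∈ s, (if f i = 0 then 1 else 0) := expect_le_expect fun i _ => ?_
    _ = #{i ∈ s | f i = 0} / #s := hindicator
  split_ifs with hi
  · simp
  · have : (1 : ℝ) ≤ f i := mod_cast Nat.one_le_iff_ne_zero.2 hi
    linarith

variable [DecidableEq ι]

lemma succ_nsmul_sum_powersetCard_succ {M : Type*} [AddCommMonoid M] (s : Finset ι) (m : ℕ)
    (f : Finset ι → M) :
    (m + 1) • ∑ J ∈ powersetCard (m + 1) s, f J =
      ∑ I ∈ powersetCard m s, ∑ i ∈ s \ I, f (insert i I) := by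
  have hleft : (m + 1) • ∑ J ∈ powersetCard (m + 1) s, f J =
      ∑ J ∈ powersetCard (m + 1) s, ∑ _i ∈ J, f J := by
    rw [smul_sum]
    refine sum_congr rfl fun J hJ => ?_
    rw [sum_const, (mem_powersetCard.1 hJ).2]
  rw [hleft, sum_sigma', sum_sigma']
  refine sum_bij' (fun x _ => ⟨x.1.erase x.2, x.2⟩) (fun x _ => ⟨insert x.2 x.1, x.2⟩)
    ?_ ?_ ?_ ?_ ?_
  · rintro ⟨J, i⟩ h
    simp only [mem_sigma, mem_powersetCard] at h
    have hi := h.1.1 h.2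
    simp [card_erase_of_mem h.2, h.1.2, hi, (erase_subset i J).trans h.1.1]
  · rintro ⟨I, i⟩ h
    simp only [mem_sigma, mem_powersetCard, mem_sdiff] at h
    simp [card_insert_of_notMem h.2.2, h.1.2, insert_subset h.2.1 h.1.1]
  · rintro ⟨J, i⟩ h
    simp [insert_erase (mem_sigma.1 h).2]
  · rintro ⟨I, i⟩ h
    simp [erase_insert (mem_sdiff.1 (mem_sigma.1 h).2).2]
  · rintro ⟨J, i⟩ h
    simp [insert_erase (mem_sigma.1 h).2]

lemma expect_powersetCard_succ {M : Type*} [AddCommMonoid M] [Module ℚ≥0 M] {s : Finset ι}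
    {m : ℕ} (hm : m < #s) (f : Finset ι → M) :
    𝔼 J ∈ powersetCard (m + 1) s, f J =
      𝔼 I ∈ powersetCard m s, 𝔼 i ∈ s \ I, f (insert i I) := by
  have hchoose : ((#s).choose (m + 1) : ℚ≥0) * (m + 1 : ℕ) = (#s).choose m * (#s - m : ℕ) :=
    mod_cast Nat.choose_succ_right_eq (#s) m
  have hpos : ((#s).choose (m + 1) : ℚ≥0) ≠ 0 := mod_cast (Nat.choose_pos hm).ne'
  have hpos' : ((#s).choose m : ℚ≥0) ≠ 0 := mod_cast (Nat.choose_pos hm.le).ne'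
  have hsub : ((#s - m : ℕ) : ℚ≥0) ≠ 0 := mod_cast (Nat.sub_pos_of_lt hm).ne'
  have hinner : ∀ I ∈ powersetCard m s, 𝔼 i ∈ s \ I, f (insert i I) =
      ((#s - m : ℕ) : ℚ≥0)⁻¹ • ∑ i ∈ s \ I, f (insert i I) := by
    intro I hI
    obtain ⟨hIs, hcard⟩ := mem_powersetCard.1 hI
    rw [expect, card_sdiff_of_subset hIs, hcard]
  rw [expect_congr rfl hinner, expect, expect, ← smul_sum,
    ← succ_nsmul_sum_powersetCard_succ, ← Nat.cast_smul_eq_nsmul ℚ≥0, smul_smul, smul_smul,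
    card_powersetCard, card_powersetCard]
  congr 1
  field_simp
  rw [hchoose, mul_comm]

end Averaging

section SpanCodim

variable {K V ι : Type*} [DivisionRing K] [AddCommGroup V] [Module K V]

variable (K) in
/-- The codimension of the span of the vectors `v i`, `i ∈ I`: how far the sample `I` is from
spanning. It is `ℕ`-valued and meant for finite-dimensional `V`, since `finrank` is `0` on a
quotient of infinite dimension. -/
noncomputable def spanCodim (v : ι → V) (I : Set ι) : ℕ :=
  finrank K (V ⧸ Submodule.span K (v '' I))

variable [FiniteDimensional K V] (v : ι → V)

lemma spanCodim_le_finrank (I : Set ι) : spanCodim K v I ≤ finrank K V :=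
  Submodule.finrank_quotient_le _

variable {v}

lemma spanCodim_eq_zero_iff {I : Set ι} :
    spanCodim K v I = 0 ↔ Submodule.span K (v '' I) = ⊤ := by
  rw [spanCodim, finrank_zero_iff, Submodule.Quotient.subsingleton_iff]

lemma spanCodim_anti {I J : Set ι} (h : I ⊆ J) : spanCodim K v J ≤ spanCodim K v I := by
  have hle := Submodule.finrank_mono (Submodule.span_mono (R := K) (Set.image_mono (f := v) h))
  have hI := (Submodule.span K (v '' I)).finrank_quotient_add_finrank
  have hJ := (Submodule.span K (v '' J)).finrank_quotient_add_finrank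
  unfold spanCodim
  omega

lemma spanCodim_insert_lt {I : Set ι} {i : ι} (hi : v i ∉ Submodule.span K (v '' I)) :
    spanCodim K v (insert i I) < spanCodim K v I := by
  have hlt : Submodule.span K (v '' I) < Submodule.span K (v '' insert i I) := by
    refine SetLike.lt_iff_le_and_exists.2
      ⟨Submodule.span_mono (Set.image_mono (Set.subset_insert i I)), v i, ?_, hi⟩
    exact Submodule.subset_span (Set.mem_image_of_mem v (Set.mem_insert i I))
  have hfin := Submodule.finrank_lt_finrank_of_lt hlt
  have hI := (Submodule.span K (v '' I)).finrank_quotient_add_finrank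
  have hinsert := (Submodule.span K (v '' insert i I)).finrank_quotient_add_finrank
  unfold spanCodim
  omega

lemma sum_spanCodim_insert_add_card_le {s I : Finset ι} :
    ∑ i ∈ s \ I, spanCodim K v (insert i (I : Set ι)) +
      #{i ∈ s | v i ∉ Submodule.span K (v '' I)} ≤ #(s \ I) * spanCodim K v I := by
  have hescape : {i ∈ s | v i ∉ Submodule.span K (v '' I)} =
      {i ∈ s \ I | v i ∉ Submodule.span K (v '' I)} := by
    ext i
    have : i ∈ I → v i ∈ Submodule.span K (v '' I) := fun hi =>
      Submodule.subset_span (Set.mem_image_of_mem v hi)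
    simp only [mem_filter, mem_sdiff]
    tauto
  rw [hescape, card_filter, ← sum_add_distrib, ← smul_eq_mul]
  refine sum_le_card_nsmul _ _ _ fun i _ => ?_
  split_ifs with hi
  · exact spanCodim_anti (Set.subset_insert i I)
  · exact spanCodim_insert_lt hi

lemma expect_spanCodim_insert_le {s I : Finset ι} (hI : I ⊂ s) {c : ℝ} (hc : 0 ≤ c)
    (hescape : #s * c * spanCodim K v I ≤ #{i ∈ s | v i ∉ Submodule.span K (v '' I)}) :
    𝔼 i ∈ s \ I, (spanCodim K v (insert i (I : Set ι)) : ℝ) ≤ (1 - c) * spanCodim K v I := by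
  have hpos : (0 : ℝ) < #(s \ I) := mod_cast card_pos.2 (sdiff_nonempty.2 hI.2)
  have hle : (#(s \ I) : ℝ) ≤ #s := mod_cast card_le_card sdiff_subset
  have hsum : ∑ i ∈ s \ I, (spanCodim K v (insert i (I : Set ι)) : ℝ) +
      #{i ∈ s | v i ∉ Submodule.span K (v '' I)} ≤ #(s \ I) * spanCodim K v I := by
    exact_mod_cast sum_spanCodim_insert_add_card_le (K := K) (v := v) (s := s) (I := I)
  rw [expect_eq_sum_div_card, div_le_iff₀ hpos]
  calc ∑ i ∈ s \ I, (spanCodim K v (insert i (I : Set ι)) : ℝ)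
      ≤ #(s \ I) * spanCodim K v I - #s * c * spanCodim K v I := by linarith
    _ ≤ #(s \ I) * spanCodim K v I - #(s \ I) * c * spanCodim K v I := by gcongr
    _ = (1 - c) * spanCodim K v I * #(s \ I) := by ring

lemma expect_spanCodim_le {s : Finset ι} {c : ℝ} (hc : 0 ≤ c)
    (hescape : ∀ I ⊆ s,
      #s * c * spanCodim K v I ≤ #{i ∈ s | v i ∉ Submodule.span K (v '' I)})
    {m : ℕ} (hm : m ≤ #s) :
    𝔼 I ∈ powersetCard m s, (spanCodim K v I : ℝ) ≤ finrank K V * Real.exp (-(c * m)) := by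
  induction m with
  | zero => simpa using spanCodim_le_finrank v ∅
  | succ m ih =>
    have hstep : ∀ I ∈ powersetCard m s,
        𝔼 i ∈ s \ I, (spanCodim K v (insert i I : Finset ι) : ℝ) ≤
          (1 - c) * spanCodim K v I := by
      intro I hI
      obtain ⟨hIs, hcard⟩ := mem_powersetCard.1 hI
      have hssub : I ⊂ s := hIs.ssubset_of_ne (by rintro rfl; omega)
      simpa only [coe_insert] using expect_spanCodim_insert_le hssub hc (hescape I hIs)
    have hnonneg : 0 ≤ 𝔼 I ∈ powersetCard m s, (spanCodim K v I : ℝ) :=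
      expect_nonneg fun I _ => Nat.cast_nonneg _
    calc 𝔼 J ∈ powersetCard (m + 1) s, (spanCodim K v J : ℝ)
        ≤ (1 - c) * 𝔼 I ∈ powersetCard m s, (spanCodim K v I : ℝ) := by
          rw [expect_powersetCard_succ hm, mul_expect]
          exact expect_le_expect hstep
      _ ≤ Real.exp (-c) * 𝔼 I ∈ powersetCard m s, (spanCodim K v I : ℝ) :=
          mul_le_mul_of_nonneg_right (Real.one_sub_le_exp_neg c) hnonneg
      _ ≤ Real.exp (-c) * (finrank K V * Real.exp (-(c * m))) := by
          gcongr
          exact ih (Nat.le_of_succ_le hm)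
      _ = finrank K V * Real.exp (-(c * (m + 1 : ℕ))) := by
          rw [mul_left_comm, ← Real.exp_add]
          push_cast
          ring_nf

theorem one_sub_le_card_span_eq_top_div_card {s : Finset ι} {c : ℝ} (hc : 0 ≤ c)
    (hescape : ∀ I ⊆ s,
      #s * c * spanCodim K v I ≤ #{i ∈ s | v i ∉ Submodule.span K (v '' I)})
    {m : ℕ} (hm : m ≤ #s) :
    1 - finrank K V * Real.exp (-(c * m)) ≤
      #((powersetCard m s).filter fun I : Finset ι => Submodule.span K (v '' I) = ⊤) /
        #(powersetCard m s) := by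
  have hmarkov := one_sub_expect_le_card_filter_eq_zero_div_card
    (powersetCard_nonempty.2 hm) (fun I : Finset ι => spanCodim K v I)
  simp only [spanCodim_eq_zero_iff] at hmarkov
  linarith [expect_spanCodim_le hc hescape hm]

end SpanCodim

section Frame

variable {𝕜 E ι : Type*} [RCLike 𝕜] [NormedAddCommGroup E] [InnerProductSpace 𝕜 E]
  {v : ι → E} {s : Finset ι} {A B : ℝ}

lemma sum_norm_inner_sq_le_ite {κ : Type*} [Fintype κ] {W : Submodule 𝕜 E} {e : κ → E}
    (he : Orthonormal 𝕜 e) (heW : ∀ j, e j ∈ Wᗮ) (x : E) :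
    ∑ j, ‖⟪e j, x⟫_𝕜‖ ^ 2 ≤ if x ∉ W then ‖x‖ ^ 2 else 0 := by
  split_ifs with hx
  · refine (sum_eq_zero fun j _ => ?_).le
    rw [Submodule.inner_left_of_mem_orthogonal hx (heW j), norm_zero, sq, zero_mul]
  · exact he.sum_inner_products_le x

variable [FiniteDimensional 𝕜 E]

lemma mul_finrank_quotient_le_mul_card_notMem
    (hA : ∀ x, A * ‖x‖ ^ 2 ≤ ∑ i ∈ s, ‖⟪x, v i⟫_𝕜‖ ^ 2) (hB : ∀ i ∈ s, ‖v i‖ ^ 2 ≤ B)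
    (W : Submodule 𝕜 E) :
    A * finrank 𝕜 (E ⧸ W) ≤ B * #{i ∈ s | v i ∉ W} := by
  let b := stdOrthonormalBasis 𝕜 Wᗮ
  have hb : Orthonormal 𝕜 fun j => (b j : E) :=
    b.orthonormal.comp_linearIsometry Wᗮ.subtypeₗᵢ
  calc A * finrank 𝕜 (E ⧸ W)
      = ∑ j, A * ‖(b j : E)‖ ^ 2 := by
        rw [W.quotientEquivOrthogonal.toLinearEquiv.finrank_eq]
        simp [hb.1, mul_comm]
    _ ≤ ∑ j, ∑ i ∈ s, ‖⟪(b j : E), v i⟫_𝕜‖ ^ 2 := sum_le_sum fun j _ => hA _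
    _ = ∑ i ∈ s, ∑ j, ‖⟪(b j : E), v i⟫_𝕜‖ ^ 2 := sum_comm
    _ ≤ ∑ i ∈ s, if v i ∉ W then ‖v i‖ ^ 2 else 0 :=
        sum_le_sum fun i _ => sum_norm_inner_sq_le_ite hb (fun j => (b j).2) (v i)
    _ = ∑ i ∈ s with v i ∉ W, ‖v i‖ ^ 2 := (sum_filter _ _).symm
    _ ≤ B * #{i ∈ s | v i ∉ W} := by
        rw [mul_comm, ← nsmul_eq_mul]
        exact sum_le_card_nsmul _ _ _ fun i hi => hB i (mem_of_mem_filter i hi)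

theorem one_sub_le_card_span_eq_top_div_card_of_frame (hA0 : 0 ≤ A) (hB0 : 0 ≤ B)
    (hA : ∀ x, A * ‖x‖ ^ 2 ≤ ∑ i ∈ s, ‖⟪x, v i⟫_𝕜‖ ^ 2)
    (hB : ∀ i ∈ s, ‖v i‖ ^ 2 ≤ B / #s) {m : ℕ} (hm : m ≤ #s) :
    1 - finrank 𝕜 E * Real.exp (-(A / B * m)) ≤
      #((powersetCard m s).filter fun I : Finset ι => Submodule.span 𝕜 (v '' I) = ⊤) /
        #(powersetCard m s) := by
  refine one_sub_le_card_span_eq_top_div_card (div_nonneg hA0 hB0) (fun I _ => ?_) hm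
  obtain rfl | hs := s.eq_empty_or_nonempty
  · simp
  have hcard : (0 : ℝ) < #s := mod_cast hs.card_pos
  have hcodim : A * spanCodim 𝕜 v I ≤ B / #s * #{i ∈ s | v i ∉ Submodule.span 𝕜 (v '' I)} :=
    mul_finrank_quotient_le_mul_card_notMem hA hB _
  calc #s * (A / B) * spanCodim 𝕜 v I = #s * (A * spanCodim 𝕜 v I) / B := by ring
    _ ≤ #{i ∈ s | v i ∉ Submodule.span 𝕜 (v '' I)} := by
      refine div_le_of_le_mul₀ hB0 (Nat.cast_nonneg _) ?_
      calc #s * (A * spanCodim 𝕜 v I)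
          ≤ #s * (B / #s * #{i ∈ s | v i ∉ Submodule.span 𝕜 (v '' I)}) := by gcongr
        _ = #{i ∈ s | v i ∉ Submodule.span 𝕜 (v '' I)} * B := by
          rw [← mul_assoc, mul_div_cancel₀ B hcard.ne', mul_comm]

end Frame

section Matrix

lemma rank_mul_eq_left_of_mul_eq_one {R m n p : Type*} [CommSemiring R]
    [StrongRankCondition R] [Fintype n] [Fintype p] [DecidableEq n] (A : Matrix m n R)
    {B : Matrix n p R} {C : Matrix p n R} (hBC : B * C = 1) : (A * B).rank = A.rank := by
  refine (Matrix.rank_mul_le_left A B).antisymm ?_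
  calc A.rank = (A * B * C).rank := by rw [Matrix.mul_assoc, hBC, Matrix.mul_one]
    _ ≤ (A * B).rank := Matrix.rank_mul_le_left _ _

variable {ι κ n : Type*} [Fintype n]

lemma rank_submatrix_eq_card_of_span_toLp_row_eq_top {𝕜 : Type*} [Field 𝕜] (U : Matrix ι n 𝕜)
    {I : Finset ι}
    (hI : Submodule.span 𝕜 ((fun i => WithLp.toLp 2 (U i)) '' (I : Set ι)) = ⊤) :
    (U.submatrix (fun i : I => (i : ι)) id).rank = Fintype.card n := by
  let e := WithLp.linearEquiv 2 𝕜 (n → 𝕜)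
  have hrows : Set.range (U.submatrix (fun i : I => (i : ι)) id).row =
      e '' ((fun i => WithLp.toLp 2 (U i)) '' (I : Set ι)) := by
    rw [Set.image_image, Set.image_eq_range]
    rfl
  have hspan : Submodule.span 𝕜 (Set.range (U.submatrix (fun i : I => (i : ι)) id).row) = ⊤ := by
    rw [hrows, ← LinearEquiv.coe_coe, Submodule.span_image, hI, Submodule.map_top,
      LinearEquiv.range]
  rw [Matrix.rank_eq_finrank_span_row, hspan, finrank_top, finrank_fintype_fun_eq_card]

variable [Fintype ι] [Fintype κ]

lemma sum_norm_inner_toLp_row_sq [DecidableEq n] {U : Matrix ι n ℝ} (hU : Uᵀ * U = 1)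
    (x : EuclideanSpace ℝ n) :
    ∑ i, ‖⟪x, WithLp.toLp 2 (U i)⟫_ℝ‖ ^ 2 = ‖x‖ ^ 2 := by
  have hinner : ∀ i, ⟪x, WithLp.toLp 2 (U i)⟫_ℝ = (U *ᵥ x.ofLp) i := fun i => by
    simp [PiLp.inner_apply, Matrix.mulVec, dotProduct]
  calc ∑ i, ‖⟪x, WithLp.toLp 2 (U i)⟫_ℝ‖ ^ 2 = (U *ᵥ x.ofLp) ⬝ᵥ (U *ᵥ x.ofLp) := by
        simp only [hinner, Real.norm_eq_abs, sq_abs, dotProduct, ← sq]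
    _ = x.ofLp ⬝ᵥ x.ofLp := by
        rw [Matrix.dotProduct_mulVec, ← Matrix.mulVec_transpose, Matrix.mulVec_mulVec, hU,
          Matrix.one_mulVec]
    _ = ‖x‖ ^ 2 := by simp only [EuclideanSpace.real_norm_sq_eq, dotProduct, ← sq]

lemma norm_toLp_row_le_rowNorm2Inf (U : Matrix ι n ℝ) (i : ι) :
    ‖WithLp.toLp 2 (U i)‖ ≤ rowNorm2Inf U := by
  have hnorm : ‖WithLp.toLp 2 (U i)‖ = √(∑ j, U i j ^ 2) := by
    simp [EuclideanSpace.norm_eq]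
  rw [hnorm]
  exact le_ciSup (f := fun i => √(∑ j, U i j ^ 2)) (Set.finite_range _).bddAbove i

namespace IsThinSVD

variable {X : Matrix ι κ ℝ} {r : ℕ} {U : Matrix ι (Fin r) ℝ} {S : Matrix (Fin r) (Fin r) ℝ}
  {V : Matrix κ (Fin r) ℝ}

lemma exists_mul_eq_one (h : IsThinSVD X r U S V) :
    ∃ C : Matrix κ (Fin r) ℝ, S * Vᵀ * C = 1 := by
  obtain ⟨-, -, hV, hS, hpos, -⟩ := h
  have hdet : IsUnit S.det := by
    rw [← hS.diagonal_diag, Matrix.det_diagonal]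
    exact (prod_pos fun i _ => hpos i).ne'.isUnit
  refine ⟨V * S⁻¹, ?_⟩
  rw [Matrix.mul_assoc, ← Matrix.mul_assoc Vᵀ, hV, Matrix.one_mul, Matrix.mul_nonsing_inv _ hdet]

lemma rank_submatrix_eq (h : IsThinSVD X r U S V) {m : Type*} (f : m → ι) :
    (X.submatrix f id).rank = (U.submatrix f id).rank := by
  obtain ⟨C, hC⟩ := h.exists_mul_eq_one
  have hfactor : X.submatrix f id = U.submatrix f id * (S * Vᵀ) := by
    rw [h.1, Matrix.mul_assoc]
    rfl
  rw [hfactor, rank_mul_eq_left_of_mul_eq_one _ hC]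

theorem one_sub_le_card_rank_submatrix_eq_div_card (h : IsThinSVD X r U S V) {μ : ℝ} (hμ : 0 ≤ μ)
    (hU : rowNorm2Inf U ≤ √(μ * r / Fintype.card ι)) {m : ℕ} (hm : m ≤ Fintype.card ι) :
    1 - r * Real.exp (-(m / (μ * r))) ≤
      #((powersetCard m (univ : Finset ι)).filter fun I : Finset ι =>
        (X.submatrix (fun i : I => (i : ι)) id).rank = r) /
      #(powersetCard m (univ : Finset ι)) := by
  have hrow : ∀ i ∈ univ, ‖WithLp.toLp 2 (U i)‖ ^ 2 ≤ μ * r / #(univ : Finset ι) := fun i _ =>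
    (Real.le_sqrt (norm_nonneg _) (by positivity)).1 ((norm_toLp_row_le_rowNorm2Inf U i).trans hU)
  have hspan := one_sub_le_card_span_eq_top_div_card_of_frame (𝕜 := ℝ) zero_le_one
    (by positivity : 0 ≤ μ * r) (fun x => by rw [one_mul, sum_norm_inner_toLp_row_sq h.2.1]) hrow hm
  have hrank : ∀ I : Finset ι,
      Submodule.span ℝ ((fun i => WithLp.toLp 2 (U i)) '' (I : Set ι)) = ⊤ →
      (X.submatrix (fun i : I => (i : ι)) id).rank = r := fun I hI => by
    rw [h.rank_submatrix_eq, rank_submatrix_eq_card_of_span_toLp_row_eq_top U hI, Fintype.card_fin]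
  calc 1 - r * Real.exp (-(m / (μ * r)))
      = 1 - finrank ℝ (EuclideanSpace ℝ (Fin r)) * Real.exp (-(1 / (μ * r) * m)) := by
        rw [finrank_euclideanSpace_fin, one_div_mul_eq_div]
    _ ≤ _ := hspan
    _ ≤ _ := by
        gcongr ((#(?_) : ℕ) : ℝ) / _
        exact monotone_filter_right _ fun I _ => hrank I

end IsThinSVD

end Matrix

lemma mul_exp_neg_le_of_log_div_le {a δ x : ℝ} (hδ : 0 < δ)
    (hx : Real.log (a / δ) ≤ x) : a * Real.exp (-x) ≤ δ := by
  have hle : a / δ ≤ Real.exp x := (Real.le_exp_log _).trans (Real.exp_le_exp.2 hx)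
  rw [Real.exp_neg, ← div_eq_mul_inv, div_le_iff₀ (Real.exp_pos x)]
  rwa [div_le_iff₀' hδ] at hle

lemma mul_log_div_le_three_mul_log_div_sq (r : ℕ) {μ δ ε : ℝ} (hμ : 0 ≤ μ) (hδ0 : 0 < δ)
    (hδ1 : δ ≤ 1) (hε0 : 0 < ε) (hε1 : ε ≤ 1) :
    r * μ * Real.log (r / δ) ≤ 3 * r * μ * Real.log (2 * r / δ) / ε ^ 2 := by
  obtain rfl | hr := r.eq_zero_or_pos
  · simp
  have hr1 : (1 : ℝ) ≤ r := mod_cast hr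
  have hlog : 0 ≤ Real.log (r / δ) := Real.log_nonneg ((one_le_div hδ0).2 (hδ1.trans hr1))
  have hmono : Real.log (r / δ) ≤ Real.log (2 * r / δ) := by
    gcongr
    linarith
  have hlog_two : 0 ≤ Real.log (2 * r / δ) := hlog.trans hmono
  have hsq : ε ^ 2 ≤ 3 := (pow_le_one₀ hε0.le hε1).trans (by norm_num)
  rw [le_div_iff₀ (by positivity)]
  calc r * μ * Real.log (r / δ) * ε ^ 2 ≤ r * μ * Real.log (2 * r / δ) * 3 := by gcongr
    _ = 3 * r * μ * Real.log (2 * r / δ) := by ring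

theorem stmt0_general {ι κ : Type*} [Fintype ι] [Fintype κ] {r : ℕ} (X : Matrix ι κ ℝ)
    (U : Matrix ι (Fin r) ℝ) (S : Matrix (Fin r) (Fin r) ℝ) (V : Matrix κ (Fin r) ℝ)
    (hsvd : IsThinSVD X r U S V) (μ : ℝ) (hμ : 0 < μ)
    (hU : rowNorm2Inf U ≤ √(μ * r / Fintype.card ι)) (δ : ℝ) (hδ : 0 < δ)
    (m : ℕ) (hm : m ≤ Fintype.card ι) (hsize : r * μ * Real.log (r / δ) ≤ m) :
    1 - δ ≤
      #((powersetCard m (univ : Finset ι)).filter fun I : Finset ι =>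
        (X.submatrix (fun i : I => (i : ι)) id).rank = r) /
      #(powersetCard m (univ : Finset ι)) := by
  have hlog : Real.log (r / δ) ≤ m / (μ * r) := by
    obtain rfl | hr := r.eq_zero_or_pos
    · simp
    rw [le_div_iff₀ (by positivity)]
    linarith
  have hfail : r * Real.exp (-(m / (μ * r))) ≤ δ :=
    mul_exp_neg_le_of_log_div_le hδ hlog
  linarith [hsvd.one_sub_le_card_rank_submatrix_eq_div_card hμ.le hU hm]

/-- if `X ∈ ℝ^{N×T}` has rank `r < min{N,T}`, a thin SVD `X = UΣVᵀ` with
`‖U‖_{2,∞} ≤ √(μ₁ r / N)` for some `μ₁ ≥ 1`, and `I` is a uniformly random subset of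
`{1,…,N}` of size `m ≥ 3 r μ₁ ln(2r/δ)/ε²`, then `rank X(I,:) = r` with probability
at least `1 - δ`. -/
theorem stmt0 {N T r : ℕ} (X : Matrix (Fin N) (Fin T) ℝ)
    (hrank : X.rank = r) (hr : r < min N T)
    (U : Matrix (Fin N) (Fin r) ℝ) (S : Matrix (Fin r) (Fin r) ℝ)
    (V : Matrix (Fin T) (Fin r) ℝ) (hsvd : IsThinSVD X r U S V)
    (μ₁ : ℝ) (hμ₁ : 1 ≤ μ₁) (hU : rowNorm2Inf U ≤ Real.sqrt (μ₁ * r / N))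
    (δ ε : ℝ) (hδ0 : 0 < δ) (hδ1 : δ < 1) (hε0 : 0 < ε) (hε1 : ε < 1)
    (m : ℕ) (hmN : m ≤ N)
    (hm : 3 * r * μ₁ * Real.log (2 * r / δ) / ε ^ 2 ≤ (m : ℝ)) :
    1 - δ ≤
      (((Finset.powersetCard m (Finset.univ : Finset (Fin N))).filter
          (fun I : Finset (Fin N) =>
            (X.submatrix (fun i : ↥I => (i : Fin N)) id).rank = r)).card : ℝ) /
        ((Finset.powersetCard m (Finset.univ : Finset (Fin N))).card : ℝ) :=
  stmt0_general X U S V hsvd μ₁ (by linarith) (by simpa using hU) δ hδ0 m (by simpa using hmN)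
    ((mul_log_div_le_three_mul_log_div_sq r (by linarith) hδ0 hδ1.le hε0 hε1.le).trans hm)
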